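/- For every finite graph G with at least one vertex, χ(G) ≤ z(G) ≤ min{Γ(G), b(G)} ≤ Δ(G) + 1, where χ is the chromatic number, z the z-chromatic number, Γ the Grundy number, b the b-chromatic number and Δ the maximum degree. -/

import Mathlib

open SimpleGraph

universe u v

/-- `c` is a z-coloring of `G` using exactly the `k` colors `0, …, k-1`:
it is proper, every color class is nonempty, every vertex of color `j` has a
neighbor of each color `i < j` (Grundy property), and there are vertices
`u 0, …, u (k-1)` with `u j` of color `j`, such that `u (k-1)` is adjacent to
every other `u j`, and each `u j` has a neighbor of every color `i ≠ j`. -/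
def IsZColoring {V : Type u} (G : SimpleGraph V) (k : ℕ) (c : V → ℕ) : Prop :=
  (∀ v, c v < k) ∧
  (∀ ⦃x y : V⦄, G.Adj x y → c x ≠ c y) ∧
  (∀ i, i < k → ∃ v, c v = i) ∧
  (∀ v : V, ∀ i, i < c v → ∃ w, G.Adj v w ∧ c w = i) ∧
  (∃ u : ℕ → V,
    (∀ j, j < k → c (u j) = j) ∧
    (∀ j, j < k - 1 → G.Adj (u (k - 1)) (u j)) ∧
    (∀ i, i < k → ∀ j, j < k → i ≠ j → ∃ w, G.Adj (u j) w ∧ c w = i))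

/-- The z-chromatic number: the maximum number of colors in a z-coloring. -/
noncomputable def zNum {V : Type u} (G : SimpleGraph V) : ℕ :=
  sSup {k | ∃ c : V → ℕ, IsZColoring G k c}

/-- `c` is a Grundy coloring of `G` using exactly the `k` colors `0, …, k-1`. -/
def IsGrundyColoring {V : Type u} (G : SimpleGraph V) (k : ℕ) (c : V → ℕ) : Prop :=
  (∀ v, c v < k) ∧
  (∀ ⦃x y : V⦄, G.Adj x y → c x ≠ c y) ∧
  (∀ i, i < k → ∃ v, c v = i) ∧
  (∀ v : V, ∀ i, i < c v → ∃ w, G.Adj v w ∧ c w = i)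

/-- The Grundy number: the maximum number of colors in a Grundy coloring. -/
noncomputable def grundyNum {V : Type u} (G : SimpleGraph V) : ℕ :=
  sSup {k | ∃ c : V → ℕ, IsGrundyColoring G k c}

/-- `c` is a b-coloring of `G` using exactly the `k` colors `0, …, k-1`:
proper, and every color class contains a vertex adjacent to a vertex of every
other color class. -/
def IsBColoring {V : Type u} (G : SimpleGraph V) (k : ℕ) (c : V → ℕ) : Prop :=
  (∀ v, c v < k) ∧
  (∀ ⦃x y : V⦄, G.Adj x y → c x ≠ c y) ∧
  (∀ i, i < k → ∃ v, c v = i ∧ ∀ j, j < k → j ≠ i → ∃ w, G.Adj v w ∧ c w = j)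

/-- The b-chromatic number: the maximum number of colors in a b-coloring. -/
noncomputable def bNum {V : Type u} (G : SimpleGraph V) : ℕ :=
  sSup {k | ∃ c : V → ℕ, IsBColoring G k c}

/-- The chromatic number, as a natural number. -/
noncomputable def chromNum {V : Type u} (G : SimpleGraph V) : ℕ :=
  sInf {k | G.Colorable k}

/-- The maximum degree of a graph (degree measured by `Set.ncard` of the
neighbor set), as the supremum of all achieved degrees. -/
noncomputable def maxDeg {V : Type u} (G : SimpleGraph V) : ℕ :=
  sSup {d | ∃ v : V, (G.neighborSet v).ncard = d}

/-!
Every b-vertex sees all colors but its own, so a Grundy or b-coloring has at most `Δ + 1` colors,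
and each z-coloring is both. For `χ ≤ z`, take among the proper colorings with `χ` colors one whose
top color class is minimal under inclusion. Lowering colors greedily never enlarges the top class,
so the coloring may be taken to be Grundy as well. Let `v` have the top color. If no neighbor of
`v` of color `b` were a b-vertex, each of them could be moved to a color missing from its
neighborhood; that color is not the top one, as `v` is a neighbor. Then `v` itself could take
color `b`, contradicting minimality.
-/

section DegreeBound

variable {V : Type u} {G : SimpleGraph V} {k : ℕ} {c : V → ℕ}

theorem card_le_ncard_neighborSet_add_one {α : Type*} (c : V → α) (s : Finset α) {v : V}
    (hv : (G.neighborSet v).Finite) (h : ∀ a ∈ s, a ≠ c v → ∃ w, G.Adj v w ∧ c w = a) :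
    s.card ≤ (G.neighborSet v).ncard + 1 := by
  have hsub : (s : Set α) ⊆ insert (c v) (c '' G.neighborSet v) := fun a ha =>
    or_iff_not_imp_left.2 fun hne => h a ha hne
  calc s.card = (s : Set α).ncard := (Set.ncard_coe_finset s).symm
    _ ≤ (insert (c v) (c '' G.neighborSet v)).ncard :=
      Set.ncard_le_ncard hsub ((hv.image c).insert _)
    _ ≤ (c '' G.neighborSet v).ncard + 1 := Set.ncard_insert_le _ _
    _ ≤ (G.neighborSet v).ncard + 1 := Nat.add_le_add_right (Set.ncard_image_le hv) 1

theorem ncard_neighborSet_le_maxDeg [Finite V] (G : SimpleGraph V) (v : V) :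
    (G.neighborSet v).ncard ≤ maxDeg G :=
  le_csSup (Set.finite_range fun w => (G.neighborSet w).ncard).bddAbove ⟨v, rfl⟩

theorem le_maxDeg_add_one_of_forall_exists_adj [Finite V] {v : V}
    (h : ∀ i < k, i ≠ c v → ∃ w, G.Adj v w ∧ c w = i) : k ≤ maxDeg G + 1 :=
  calc k = (Finset.range k).card := (Finset.card_range k).symm
    _ ≤ (G.neighborSet v).ncard + 1 :=
      card_le_ncard_neighborSet_add_one c _ (Set.toFinite _) (by simpa using h)
    _ ≤ maxDeg G + 1 := Nat.add_le_add_right (ncard_neighborSet_le_maxDeg G v) 1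

theorem IsGrundyColoring.le_maxDeg_add_one [Finite V] (h : IsGrundyColoring G k c) :
    k ≤ maxDeg G + 1 := by
  obtain rfl | hk := k.eq_zero_or_pos
  · exact Nat.zero_le _
  obtain ⟨-, -, hsurj, hgrundy⟩ := h
  obtain ⟨v, hv⟩ := hsurj (k - 1) (by lia)
  exact le_maxDeg_add_one_of_forall_exists_adj fun i hi hne => hgrundy v i (by lia)

theorem IsBColoring.le_maxDeg_add_one [Finite V] (h : IsBColoring G k c) :
    k ≤ maxDeg G + 1 := by
  obtain rfl | hk := k.eq_zero_or_pos
  · exact Nat.zero_le _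
  obtain ⟨v, hv, hdom⟩ := h.2.2 0 hk
  exact le_maxDeg_add_one_of_forall_exists_adj fun i hi hne => hdom i hi (hv ▸ hne)

theorem IsZColoring.isGrundyColoring (h : IsZColoring G k c) : IsGrundyColoring G k c :=
  ⟨h.1, h.2.1, h.2.2.1, h.2.2.2.1⟩

theorem IsZColoring.isBColoring (h : IsZColoring G k c) : IsBColoring G k c := by
  obtain ⟨hlt, hproper, -, -, u, hcolor, -, hdom⟩ := h
  exact ⟨hlt, hproper, fun i hi =>
    ⟨u i, hcolor i hi, fun j hj hne => hdom j hj i hi hne⟩⟩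

theorem IsGrundyColoring.le_grundyNum [Finite V] (h : IsGrundyColoring G k c) :
    k ≤ grundyNum G :=
  le_csSup ⟨maxDeg G + 1, fun _ ⟨_, hc⟩ => hc.le_maxDeg_add_one⟩ ⟨c, h⟩

theorem IsBColoring.le_bNum [Finite V] (h : IsBColoring G k c) : k ≤ bNum G :=
  le_csSup ⟨maxDeg G + 1, fun _ ⟨_, hc⟩ => hc.le_maxDeg_add_one⟩ ⟨c, h⟩

theorem IsZColoring.le_zNum [Finite V] (h : IsZColoring G k c) : k ≤ zNum G :=
  le_csSup ⟨maxDeg G + 1, fun _ ⟨_, hc⟩ => hc.isGrundyColoring.le_maxDeg_add_one⟩ ⟨c, h⟩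

end DegreeBound

section Recoloring

variable {V : Type u} {α : Type*} {G : SimpleGraph V}

theorem exists_coloring_eqOn_of_isIndepSet (C : G.Coloring α) {S : Set V} (hS : G.IsIndepSet S)
    {m : V → α} (hm : ∀ x ∈ S, ∀ w, G.Adj x w → C w ≠ m x) :
    ∃ C' : G.Coloring α, Set.EqOn C' m S ∧ Set.EqOn C' C Sᶜ := by
  classical
  refine ⟨Coloring.mk (S.piecewise m C) fun {x y} hxy => ?_,
    S.piecewise_eqOn m C, S.piecewise_eqOn_compl m C⟩
  by_cases hx : x ∈ S <;> by_cases hy : y ∈ S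
  · exact absurd hxy (hS hx hy hxy.ne)
  · simpa [hx, hy] using (hm x hx y hxy).symm
  · simpa [hx, hy] using hm y hy x hxy.symm
  · simpa [hx, hy] using C.valid hxy

theorem exists_coloring_eq_update [DecidableEq V] (C : G.Coloring α) {v : V} {a : α}
    (h : ∀ w, G.Adj v w → C w ≠ a) : ∃ C' : G.Coloring α, ⇑C' = Function.update C v a := by
  obtain ⟨C', hmoved, hfixed⟩ := exists_coloring_eqOn_of_isIndepSet C (S := {v}) (m := fun _ => a)
    (Set.pairwise_singleton v _) (by simpa using h)
  exact ⟨C', Function.eq_update_iff.2 ⟨hmoved rfl, fun _ hx => hfixed hx⟩⟩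

/-- The Grundy condition for a coloring by an arbitrary ordered set of colors: every vertex has
a neighbor of each color below its own. -/
def IsGreedy [LT α] (C : G.Coloring α) : Prop :=
  ∀ v, ∀ a < C v, ∃ w, G.Adj v w ∧ C w = a

/-- A b-vertex of a coloring: it has a neighbor of every color other than its own. All of `α`
counts as the palette, including colors that are not attained. -/
def IsBVertex (C : G.Coloring α) (v : V) : Prop :=
  ∀ a ≠ C v, ∃ w, G.Adj v w ∧ C w = a

theorem IsGreedy.isBVertex_of_eq_top [PartialOrder α] [OrderTop α] {C : G.Coloring α}
    (hC : IsGreedy C) {v : V} (hv : C v = ⊤) : IsBVertex C v := fun a ha =>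
  hC v a (hv ▸ lt_top_iff_ne_top.2 (hv ▸ ha))

theorem exists_isGreedy_le [Finite V] [Preorder α] [WellFoundedLT α] (C₀ : G.Coloring α) :
    ∃ C : G.Coloring α, IsGreedy C ∧ ⇑C ≤ C₀ := by
  classical
  obtain ⟨_, hle, ⟨C, rfl⟩, hmin⟩ :=
    exists_minimal_le_of_wellFoundedLT (· ∈ Set.range fun C : G.Coloring α => ⇑C) C₀ ⟨C₀, rfl⟩
  refine ⟨C, fun v a ha => ?_, hle⟩
  by_contra! hno
  have hlower : Function.update C v a ≤ C := update_le_self_iff.2 ha.le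
  have hCv : C v ≤ a := by
    simpa using hmin (exists_coloring_eq_update C hno) hlower v
  exact hCv.not_gt ha

theorem exists_colorClass_ssubset (C : G.Coloring α) {v : V} {b : α} (hb : b ≠ C v)
    (h : ∀ x, G.Adj v x → C x = b → ¬ IsBVertex C x) :
    ∃ C' : G.Coloring α, C'.colorClass (C v) ⊂ C.colorClass (C v) := by
  classical
  have hmissing : ∀ x ∈ C.colorClass b ∩ G.neighborSet v,
      ∃ a ≠ C x, ∀ w, G.Adj x w → C w ≠ a := by
    rintro x ⟨hxb, hvx⟩
    simpa [IsBVertex] using h x hvx hxb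
  have : Nonempty α := ⟨b⟩
  choose! m hm_ne hm using hmissing
  obtain ⟨C₁, hC₁_moved, hC₁_fixed⟩ := exists_coloring_eqOn_of_isIndepSet C
    ((C.isIndepSet_colorClass b).mono Set.inter_subset_left) hm
  have hb_free : ∀ w, G.Adj v w → C₁ w ≠ b := by
    intro w hvw
    by_cases hw : C w = b
    · rw [hC₁_moved ⟨hw, hvw⟩, ← hw]
      exact hm_ne w ⟨hw, hvw⟩
    · rwa [hC₁_fixed fun hmem => hw hmem.1]
  obtain ⟨C₂, hC₂⟩ := exists_coloring_eq_update C₁ hb_free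
  refine ⟨C₂, (Set.ssubset_iff_of_subset fun x (hx : C₂ x = C v) => ?_).2 ⟨v, rfl, ?_⟩⟩
  · have hxv : x ≠ v := by
      rintro rfl
      exact hb (by simpa [hC₂] using hx)
    have hC₁x : C₁ x = C v := by simpa [hC₂, hxv] using hx
    by_cases hxS : x ∈ C.colorClass b ∩ G.neighborSet v
    · exact absurd (hC₁x.symm.trans (hC₁_moved hxS)) (hm x hxS v hxS.2.symm)
    · exact (hC₁_fixed hxS).symm.trans hC₁x
  · change C₂ v ≠ C v
    simpa [hC₂] using hb

theorem exists_isGreedy_minimal_colorClass_top [Finite V] [PartialOrder α] [OrderTop α]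
    [WellFoundedLT α] [Nonempty (G.Coloring α)] :
    ∃ C : G.Coloring α, IsGreedy C ∧ ∀ C' : G.Coloring α, ¬ C'.colorClass ⊤ ⊂ C.colorClass ⊤ := by
  obtain ⟨C₀, hmin⟩ := exists_minimalFor_of_wellFoundedLT (fun _ : G.Coloring α => True)
    (fun C => C.colorClass ⊤) ⟨Classical.arbitrary _, trivial⟩
  obtain ⟨C, hgreedy, hle⟩ := exists_isGreedy_le C₀
  have hsub : C.colorClass ⊤ ⊆ C₀.colorClass ⊤ := fun x (hx : C x = ⊤) =>
    top_le_iff.1 (hx ▸ hle x)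
  exact ⟨C, hgreedy, fun C' hC' => hmin.not_lt trivial (hC'.trans_subset hsub)⟩

/-- The system `u` required of a z-coloring, for a palette with a greatest color: one b-vertex of
each color, the one of color `⊤` being adjacent to all the others. -/
structure IsZSystem [Top α] (C : G.Coloring α) (u : α → V) : Prop where
  color_eq : ∀ a, C (u a) = a
  adj_top : ∀ a ≠ ⊤, G.Adj (u ⊤) (u a)
  isBVertex : ∀ a, IsBVertex C (u a)

theorem IsGreedy.exists_isZSystem [PartialOrder α] [OrderTop α] {C : G.Coloring α}
    (hC : IsGreedy C) (hmin : ∀ C' : G.Coloring α, ¬ C'.colorClass ⊤ ⊂ C.colorClass ⊤)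
    {v : V} (hv : C v = ⊤) : ∃ u, IsZSystem C u := by
  classical
  have hdom : ∀ b ≠ ⊤, ∃ x, G.Adj v x ∧ C x = b ∧ IsBVertex C x := by
    intro b hb
    by_contra! hno
    obtain ⟨C', hC'⟩ := exists_colorClass_ssubset C (hv ▸ hb) hno
    exact hmin C' (hv ▸ hC')
  have : Nonempty V := ⟨v⟩
  choose! x hadj hcolor hbvertex using hdom
  refine ⟨Function.update x ⊤ v, fun a => ?_, fun a ha => ?_, fun a => ?_⟩
  · obtain rfl | ha := eq_or_ne a ⊤
    · simpa using hv
    · simpa [ha] using hcolor a ha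
  · simpa [ha] using hadj a ha
  · obtain rfl | ha := eq_or_ne a ⊤
    · simpa using hC.isBVertex_of_eq_top hv
    · simpa [ha] using hbvertex a ha

end Recoloring

section Existence

variable {V : Type u} {G : SimpleGraph V} {n : ℕ}

theorem IsZSystem.isZColoring {C : G.Coloring (Fin (n + 1))} {u : Fin (n + 1) → V}
    (hu : IsZSystem C u) (hC : IsGreedy C) : IsZColoring G (n + 1) fun v => (C v : ℕ) := by
  have hval : ∀ {j}, j < n + 1 → (Fin.ofNat (n + 1) j : ℕ) = j := Nat.mod_eq_of_lt
  refine ⟨fun v => (C v).is_lt, fun x y hxy => Fin.val_ne_of_ne (C.valid hxy),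
    fun i hi => ⟨u ⟨i, hi⟩, by simp [hu.color_eq]⟩, fun v i hi => ?_,
    fun j => u (Fin.ofNat (n + 1) j), fun j hj => ?_, fun j hj => ?_, fun i hi j hj hij => ?_⟩
  · obtain ⟨w, hvw, hw⟩ := hC v ⟨i, hi.trans (C v).is_lt⟩ hi
    exact ⟨w, hvw, congrArg Fin.val hw⟩
  · exact (congrArg Fin.val (hu.color_eq _)).trans (hval hj)
  · have htop : Fin.ofNat (n + 1) n = ⊤ := Fin.ext (hval n.lt_succ_self)
    have hne : Fin.ofNat (n + 1) j ≠ ⊤ := fun h =>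
      hj.ne ((hval (hj.trans n.lt_succ_self)).symm.trans (congrArg Fin.val h))
    simpa only [Nat.add_sub_cancel, htop] using hu.adj_top _ hne
  · have hne : (⟨i, hi⟩ : Fin (n + 1)) ≠ C (u (Fin.ofNat (n + 1) j)) := fun h =>
      hij ((congrArg Fin.val h).trans (by rw [hu.color_eq, hval hj]))
    obtain ⟨w, hadj, hw⟩ := hu.isBVertex _ _ hne
    exact ⟨w, hadj, congrArg Fin.val hw⟩

theorem exists_isZColoring_of_chromaticNumber_eq [Finite V] [Nonempty V] {k : ℕ}
    (hk : G.chromaticNumber = k) : ∃ c, IsZColoring G k c := by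
  have hcolorable : G.Colorable k := chromaticNumber_le_iff_colorable.1 hk.le
  obtain _ | n := k
  · exact absurd (colorable_zero_iff.1 hcolorable) (not_isEmpty_of_nonempty V)
  have : Nonempty (G.Coloring (Fin (n + 1))) := hcolorable
  obtain ⟨C, hgreedy, hmin⟩ := exists_isGreedy_minimal_colorClass_top (G := G) (α := Fin (n + 1))
  obtain ⟨v, hv⟩ := (chromaticNumber_eq_iff_forall_surjective hcolorable).1 hk C ⊤
  obtain ⟨u, hu⟩ := hgreedy.exists_isZSystem hmin hv
  exact ⟨_, hu.isZColoring hgreedy⟩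

theorem chromaticNumber_eq_chromNum [Finite V] (G : SimpleGraph V) :
    G.chromaticNumber = chromNum G :=
  have := Fintype.ofFinite V
  G.colorable_of_fintype.chromaticNumber_eq_sInf

end Existence

/-- for every finite graph `G` with at least one vertex,
`χ(G) ≤ z(G) ≤ min {Γ(G), b(G)} ≤ Δ(G) + 1`. -/
theorem chrom_le_z_le_min_grundy_b_le_maxDeg {V : Type u} [Fintype V]
    [Nonempty V] (G : SimpleGraph V) :
    chromNum G ≤ zNum G ∧ zNum G ≤ min (grundyNum G) (bNum G) ∧
    min (grundyNum G) (bNum G) ≤ maxDeg G + 1 := by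
  refine ⟨?_, le_min ?_ ?_, (min_le_left _ _).trans ?_⟩
  · obtain ⟨c, hc⟩ := exists_isZColoring_of_chromaticNumber_eq (chromaticNumber_eq_chromNum G)
    exact hc.le_zNum
  · exact csSup_le' fun k ⟨c, hc⟩ => hc.isGrundyColoring.le_grundyNum
  · exact csSup_le' fun k ⟨c, hc⟩ => hc.isBColoring.le_bNum
  · exact csSup_le' fun k ⟨c, hc⟩ => hc.le_maxDeg_add_one
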